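/- C₁ < 1.3208; that is, there exists g ∈ A₁, not identically zero, with g(0) > 0 and ρ₁(g)/g(0) < 1.3208. -/

import Mathlib

open MeasureTheory Filter
open scoped Classical

noncomputable section

/-- The Fourier transform `ĝ(α) = ∫ g(x) e^{-2πiαx} dx` of a real-valued function. -/
def fourierT (g : ℝ → ℝ) (α : ℝ) : ℂ :=
  ∫ x : ℝ, (g x : ℂ) * Complex.exp (-(2 * Real.pi * α * x : ℝ) * Complex.I)

/-- The class `A₁` of continuous, even, non-negative functions `g ∈ L¹(ℝ)`
with `ĝ(α) ≤ 0` for `|α| ≥ 1` (such `ĝ` is real-valued since `g` is even and real). -/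
def memA1 (g : ℝ → ℝ) : Prop :=
  Continuous g ∧ (∀ x, g (-x) = g x) ∧ (∀ x, 0 ≤ g x) ∧ MeasureTheory.Integrable g ∧
    ∀ α : ℝ, 1 ≤ |α| → (fourierT g α).re ≤ 0

/-- The functional `ρ₁(g) = ĝ(0) + ∫_{-1}^{1} ĝ(α)|α| dα`. -/
def rho1 (g : ℝ → ℝ) : ℝ :=
  (fourierT g 0).re + ∫ α in (-1 : ℝ)..1, (fourierT g α).re * |α|

/-- The constant `C₁ = inf ρ₁(g)/g(0)` over nonzero `g ∈ A₁` with `g(0) > 0`. -/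
def C1 : ℝ :=
  sInf {c : ℝ | ∃ g : ℝ → ℝ, memA1 g ∧ g ≠ 0 ∧ 0 < g 0 ∧ c = rho1 g / g 0}

/-!
The near-extremal function is the Fejér kernel at scale `N` times the squared modulus of a
trigonometric polynomial `∑ b k * exp (2πi k x / N)` with real coefficients. It is nonnegative, and
since the Fejér kernel is the Fourier transform of a tent, its own transform `ĝ` interpolates
linearly between the nodes `i / N`, where its values are `N` times the autocorrelations of `b`.
Hence `ĝ ≤ 0` on `|α| ≥ 1` as soon as the autocorrelations of lag at least `N` are nonpositive, and
`ρ₁(g)` is at most an explicit linear form in the autocorrelations of lag less than `N`: the tent at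
`i / N` integrates `|α|` exactly, except at `i = 0`, where it contributes `1 / (3 N)`. For integers
`b k` everything is thus reduced to integer inequalities. Finally, `|ĝ| ≤ ĝ(0)` for `g ≥ 0` and
`∫_{-1}^{1} |α| dα = 1` give `ρ₁(g) ≥ 0`, so the infimum `C₁` is over a set bounded below.
-/

section Tent

/-- The tent (triangle) function `max 0 (1 - |u|)`, whose translates interpolate linearly between
integer nodes. -/
def tent (u : ℝ) : ℝ := max 0 (1 - |u|)

lemma continuous_tent : Continuous tent := by unfold tent; fun_prop

lemma tent_nonneg (u : ℝ) : 0 ≤ tent u := le_max_left _ _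

lemma tent_neg (u : ℝ) : tent (-u) = tent u := by simp only [tent, abs_neg]

lemma tent_zero : tent 0 = 1 := by simp [tent]

lemma tent_eq_zero {u : ℝ} (hu : 1 ≤ |u|) : tent u = 0 := max_eq_left (by linarith)

lemma abs_lt_one_of_tent_ne_zero {u : ℝ} (hu : tent u ≠ 0) : |u| < 1 :=
  not_le.mp fun h => hu (tent_eq_zero h)

lemma hasCompactSupport_tent : HasCompactSupport tent :=
  .intro (isCompact_Icc (a := -1) (b := 1)) fun _ hu =>
    tent_eq_zero (not_lt.mp fun h => hu (abs_le.mp h.le))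

lemma integrable_tent : Integrable tent :=
  continuous_tent.integrable_of_hasCompactSupport hasCompactSupport_tent

lemma integrable_tent_mul {f : ℝ → ℝ} (hf : Continuous f) : Integrable fun u => tent u * f u :=
  (continuous_tent.mul hf).integrable_of_hasCompactSupport hasCompactSupport_tent.mul_right

lemma integral_tent_mul_comp_abs (f : ℝ → ℝ) :
    ∫ u, tent u * f |u| = 2 * ∫ u in (0 : ℝ)..1, (1 - u) * f u := by
  simp only [tent]
  rw [integral_comp_abs (f := fun v => max 0 (1 - v) * f v),
    intervalIntegral.integral_of_le zero_le_one,
    setIntegral_eq_of_subset_of_forall_sdiff_eq_zero measurableSet_Ioi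
      (Set.Ioc_subset_Ioi_self : Set.Ioc (0 : ℝ) 1 ⊆ Set.Ioi 0)]
  · congr 1
    refine setIntegral_congr_fun measurableSet_Ioc fun u hu => ?_
    simp only [max_eq_right (sub_nonneg.mpr hu.2)]
  · rintro u ⟨hu0, hu1⟩
    have hu : 1 < u := not_le.mp fun h => hu1 ⟨hu0, h⟩
    simp only [max_eq_left (sub_nonpos.mpr hu.le), zero_mul]

lemma integral_tent : ∫ u, tent u = 1 := by
  have h := integral_tent_mul_comp_abs fun _ => 1
  simp only [mul_one] at h
  rw [h, intervalIntegral.integral_sub (by simp) (by simp)]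
  norm_num

lemma integral_tent_mul_abs : ∫ u, tent u * |u| = 1 / 3 := by
  have h := integral_tent_mul_comp_abs fun u => u
  have hpoly : ∀ u : ℝ, (1 - u) * u = u - u ^ 2 := fun u => by ring
  simp_rw [hpoly] at h
  rw [h, intervalIntegral.integral_sub (by simp) (by simp)]
  norm_num

lemma integral_tent_mul_id : ∫ u, tent u * u = 0 := by
  have h := integral_neg_eq_self (fun u => tent u * u) volume
  simp only [tent_neg, mul_neg, integral_neg] at h
  linarith

lemma integral_tent_mul_abs_add {c : ℝ} (hc : 1 ≤ c) : ∫ u, tent u * |u + c| = c := by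
  have habs : ∀ u, tent u * |u + c| = tent u * u + c * tent u := fun u => by
    by_cases hu : tent u = 0
    · simp only [hu, zero_mul, mul_zero, add_zero]
    · have := (abs_lt.mp (abs_lt_one_of_tent_ne_zero hu)).1
      rw [abs_of_nonneg (by linarith)]
      ring
  simp_rw [habs]
  rw [integral_add (integrable_tent_mul continuous_id') (integrable_tent.const_mul c),
    integral_tent_mul_id, integral_const_mul, integral_tent]
  ring

lemma integral_one_sub_mul_cos {w : ℝ} (hw : w ≠ 0) :
    ∫ u in (0 : ℝ)..1, (1 - u) * Real.cos (w * u) = (1 - Real.cos w) / w ^ 2 := by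
  have hderiv : ∀ u : ℝ, HasDerivAt
      (fun u => (1 - u) * (Real.sin (w * u) / w) - Real.cos (w * u) / w ^ 2)
      ((1 - u) * Real.cos (w * u)) u := fun u => by
    have hlin : HasDerivAt (fun u => w * u) w u := hasDerivAt_const_mul w
    convert! (((hasDerivAt_id u).const_sub 1).mul (hlin.sin.div_const w)).sub
      (hlin.cos.div_const (w ^ 2)) using 1
    simp only [id]
    field_simp
    ring
  rw [intervalIntegral.integral_eq_sub_of_hasDerivAt (fun u _ => hderiv u)
    (Continuous.intervalIntegrable (by fun_prop) _ _)]
  simp only [mul_zero, mul_one, sub_self, sub_zero, Real.sin_zero, Real.cos_zero, zero_div,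
    zero_mul]
  ring

lemma integral_tent_mul_cos (y : ℝ) :
    ∫ u, tent u * Real.cos (2 * Real.pi * y * u) = Real.sinc (Real.pi * y) ^ 2 := by
  rcases eq_or_ne y 0 with rfl | hy
  · simp [integral_tent]
  have hπy : Real.pi * y ≠ 0 := mul_ne_zero Real.pi_ne_zero hy
  have h := integral_tent_mul_comp_abs fun u => Real.cos (2 * (Real.pi * y) * u)
  rw [integral_one_sub_mul_cos (mul_ne_zero two_ne_zero hπy), Real.cos_two_mul,
    Real.cos_sq'] at h
  have hcos : ∀ u : ℝ,
      Real.cos (2 * Real.pi * y * u) = Real.cos (2 * (Real.pi * y) * |u|) := fun u => by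
    rcases abs_choice u with hu | hu <;> rw [hu, mul_assoc 2]
    rw [mul_neg, Real.cos_neg]
  simp_rw [hcos]
  rw [h, Real.sinc_of_ne_zero hπy]
  field_simp
  ring

end Tent

section FourierTransform

open FourierTransform

lemma fourierT_eq_fourier (g : ℝ → ℝ) : fourierT g = 𝓕 fun x => (g x : ℂ) := by
  ext α
  rw [Real.fourier_real_eq_integral_exp_smul, fourierT]
  refine integral_congr_ae (.of_forall fun x => ?_)
  simp only [smul_eq_mul]
  rw [mul_comm]
  congr 3
  push_cast
  ring

lemma fourierT_zero (g : ℝ → ℝ) : fourierT g 0 = (∫ x, g x : ℝ) := by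
  simp [fourierT, integral_complex_ofReal]

lemma norm_fourierT_le (g : ℝ → ℝ) (α : ℝ) : ‖fourierT g α‖ ≤ ∫ x, |g x| := by
  refine (norm_integral_le_integral_norm _).trans_eq ?_
  simp only [← Complex.ofReal_neg, norm_mul, Complex.norm_exp_ofReal_mul_I, mul_one,
    Complex.norm_real, Real.norm_eq_abs]

variable {g : ℝ → ℝ}

lemma integrable_fourierT_integrand (hg : Integrable g) (α : ℝ) :
    Integrable fun x : ℝ =>
      (g x : ℂ) * Complex.exp (-(2 * Real.pi * α * x : ℝ) * Complex.I) := by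
  refine hg.ofReal.mul_bdd (c := 1) (Continuous.aestronglyMeasurable (by fun_prop))
    (.of_forall fun x => ?_)
  rw [← Complex.ofReal_neg, Complex.norm_exp_ofReal_mul_I]

lemma fourierT_sum {ι : Type*} (s : Finset ι) (c : ι → ℝ) {f : ι → ℝ → ℝ}
    (hf : ∀ i ∈ s, Integrable (f i)) (α : ℝ) :
    fourierT (fun x => ∑ i ∈ s, c i * f i x) α = ∑ i ∈ s, (c i : ℂ) * fourierT (f i) α := by
  simp_rw [fourierT, ← integral_const_mul]
  rw [← integral_finsetSum _ fun i hi => (integrable_fourierT_integrand (hf i hi) α).const_mul _]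
  refine integral_congr_ae (.of_forall fun x => ?_)
  simp only [Complex.ofReal_sum, Complex.ofReal_mul (c _), Finset.sum_mul, mul_assoc (c _ : ℂ)]

lemma fourierT_comp_div (g : ℝ → ℝ) {N : ℝ} (hN : 0 < N) (α : ℝ) :
    fourierT (fun x => g (x / N)) α = N * fourierT g (N * α) := by
  have h := Measure.integral_comp_div
    (fun x : ℝ => (g x : ℂ) * Complex.exp (-(2 * Real.pi * (N * α) * x : ℝ) * Complex.I)) N
  rw [abs_of_pos hN, Complex.real_smul] at h
  rw [fourierT, fourierT, ← h]
  refine integral_congr_ae (.of_forall fun x => ?_)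
  beta_reduce
  rw [show 2 * Real.pi * (N * α) * (x / N) = 2 * Real.pi * α * x by field_simp]

lemma fourierT_mul_cos (hg : Integrable g) (β α : ℝ) :
    fourierT (fun x => g x * Real.cos (2 * Real.pi * β * x)) α
      = (fourierT g (α - β) + fourierT g (α + β)) / 2 := by
  simp only [fourierT]
  rw [← integral_add (integrable_fourierT_integrand hg _) (integrable_fourierT_integrand hg _),
    ← integral_div]
  refine integral_congr_ae (.of_forall fun x => ?_)
  simp only [Complex.ofReal_mul (g x), Complex.ofReal_cos, Complex.cos]
  rw [← mul_add, mul_div_assoc, mul_assoc, div_mul_eq_mul_div, add_mul, ← Complex.exp_add,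
    ← Complex.exp_add]
  congr 4 <;> push_cast <;> ring

lemma fourierT_neg_of_even (heven : ∀ x, g (-x) = g x) (α : ℝ) :
    fourierT g (-α) = fourierT g α := by
  rw [fourierT, ← integral_neg_eq_self]
  simp only [heven, mul_neg, neg_mul, neg_neg, fourierT]

lemma fourierT_eq_integral_mul_cos (hg : Integrable g) (heven : ∀ x, g (-x) = g x) (α : ℝ) :
    fourierT g α = (∫ x, g x * Real.cos (2 * Real.pi * α * x) : ℝ) := by
  rw [← fourierT_zero, fourierT_mul_cos hg, zero_sub, zero_add, fourierT_neg_of_even heven,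
    add_self_div_two]

end FourierTransform

section FejerKernel

open FourierTransform

/-- The Fejér kernel of the real line, normalised to be the Fourier transform of `tent`. -/
def fejerKernel (y : ℝ) : ℝ := Real.sinc (Real.pi * y) ^ 2

lemma continuous_fejerKernel : Continuous fejerKernel :=
  (Real.continuous_sinc.comp (by fun_prop)).pow 2

lemma fejerKernel_nonneg (y : ℝ) : 0 ≤ fejerKernel y := sq_nonneg _

lemma fejerKernel_neg (y : ℝ) : fejerKernel (-y) = fejerKernel y := by
  rw [fejerKernel, mul_neg, Real.sinc_neg, fejerKernel]

lemma fejerKernel_zero : fejerKernel 0 = 1 := by simp [fejerKernel]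

lemma sinc_sq_le (y : ℝ) : Real.sinc y ^ 2 ≤ 2 * (1 + y ^ 2)⁻¹ := by
  have hone : Real.sinc y ^ 2 ≤ 1 := (sq_le_one_iff_abs_le_one _).mpr (Real.abs_sinc_le_one y)
  have hdecay : Real.sinc y ^ 2 * y ^ 2 ≤ 1 := by
    rcases eq_or_ne y 0 with rfl | hy
    · simp
    · rw [Real.sinc_of_ne_zero hy, ← mul_pow, div_mul_cancel₀ _ hy]
      exact Real.sin_sq_le_one y
  rw [← div_eq_mul_inv, le_div_iff₀ (by positivity)]
  linarith

lemma integrable_sinc_sq : Integrable fun y => Real.sinc y ^ 2 := by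
  refine (integrable_inv_one_add_sq.const_mul 2).mono'
    (Real.continuous_sinc.pow 2).aestronglyMeasurable (.of_forall fun y => ?_)
  rw [Real.norm_of_nonneg (sq_nonneg _)]
  exact sinc_sq_le y

lemma integrable_fejerKernel : Integrable fejerKernel :=
  integrable_sinc_sq.comp_mul_left' Real.pi_ne_zero

lemma fourierT_tent (y : ℝ) : fourierT tent y = fejerKernel y := by
  rw [fourierT_eq_integral_mul_cos integrable_tent tent_neg, integral_tent_mul_cos, fejerKernel]

lemma fourierT_fejerKernel (α : ℝ) : fourierT fejerKernel α = tent α := by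
  have hfourier : 𝓕 (fun u => (tent u : ℂ)) = fun y => (fejerKernel y : ℂ) := by
    rw [← fourierT_eq_fourier]
    exact funext fourierT_tent
  have hinv := congrFun (Continuous.fourierInv_fourier_eq (f := fun u => (tent u : ℂ))
    (Complex.continuous_ofReal.comp continuous_tent) integrable_tent.ofReal
    (hfourier ▸ integrable_fejerKernel.ofReal)) (-α)
  rwa [hfourier, Real.fourierInv_eq_fourier_neg, neg_neg, ← fourierT_eq_fourier, tent_neg] at hinv

end FejerKernel

section ModulatedFejer

/-- The Fejér kernel at scale `N`, modulated to the frequencies `±i / N`. -/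
def modulatedFejer (N : ℝ) (i : ℕ) (x : ℝ) : ℝ :=
  fejerKernel (x / N) * Real.cos (2 * Real.pi * (i / N) * x)

/-- The pair of tents of width `1 / N` centred at `±i / N`, the Fourier transform of
`modulatedFejer N i`. -/
def tentPair (N : ℝ) (i : ℕ) (α : ℝ) : ℝ := N * ((tent (N * α - i) + tent (N * α + i)) / 2)

variable {N : ℝ}

lemma continuous_modulatedFejer (N : ℝ) (i : ℕ) : Continuous (modulatedFejer N i) :=
  (continuous_fejerKernel.comp (by fun_prop)).mul (by fun_prop)

lemma integrable_modulatedFejer (hN : N ≠ 0) (i : ℕ) : Integrable (modulatedFejer N i) :=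
  (integrable_fejerKernel.comp_div hN).mul_bdd (c := 1)
    (Continuous.aestronglyMeasurable (by fun_prop)) (.of_forall fun _ => Real.abs_cos_le_one _)

lemma modulatedFejer_neg (N : ℝ) (i : ℕ) (x : ℝ) :
    modulatedFejer N i (-x) = modulatedFejer N i x := by
  simp only [modulatedFejer, neg_div, fejerKernel_neg, mul_neg, Real.cos_neg]

lemma modulatedFejer_zero (N : ℝ) (i : ℕ) : modulatedFejer N i 0 = 1 := by
  simp [modulatedFejer, fejerKernel_zero]

lemma fourierT_modulatedFejer (hN : 0 < N) (i : ℕ) (α : ℝ) :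
    fourierT (modulatedFejer N i) α = tentPair N i α := by
  have h := fourierT_mul_cos (integrable_fejerKernel.comp_div hN.ne') (i / N) α
  rw [fourierT_comp_div _ hN, fourierT_comp_div _ hN, fourierT_fejerKernel, fourierT_fejerKernel,
    mul_sub, mul_add, mul_div_cancel₀ _ hN.ne'] at h
  unfold modulatedFejer tentPair
  rw [h]
  push_cast
  ring

lemma continuous_tentPair (N : ℝ) (i : ℕ) : Continuous (tentPair N i) := by
  have := continuous_tent
  unfold tentPair
  fun_prop

lemma tentPair_nonneg (hN : 0 ≤ N) (i : ℕ) (α : ℝ) : 0 ≤ tentPair N i α :=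
  mul_nonneg hN (div_nonneg (add_nonneg (tent_nonneg _) (tent_nonneg _)) zero_le_two)

lemma tentPair_zero_right (N : ℝ) (i : ℕ) : tentPair N i 0 = if i = 0 then N else 0 := by
  split_ifs with hi
  · simp [tentPair, hi, tent_zero]
  · have habs : (1 : ℝ) ≤ |(i : ℝ)| := by
      rw [Nat.abs_cast]
      exact_mod_cast Nat.one_le_iff_ne_zero.mpr hi
    simp [tentPair, tent_neg, tent_eq_zero habs]

lemma tentPair_eq_zero {i : ℕ} (hi : (i : ℝ) + 1 ≤ N) {α : ℝ} (hα : 1 ≤ |α|) :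
    tentPair N i α = 0 := by
  have hN : 0 ≤ N := (by positivity : (0 : ℝ) ≤ i + 1).trans hi
  have hNα : N ≤ |N * α| := by
    rw [abs_mul, abs_of_nonneg hN]
    exact le_mul_of_one_le_right hN hα
  have hsub := abs_sub_abs_le_abs_sub (N * α) i
  have hadd := abs_sub_abs_le_abs_add (N * α) i
  rw [Nat.abs_cast] at hsub hadd
  simp [tentPair, tent_eq_zero (by linarith : 1 ≤ |N * α - i|),
    tent_eq_zero (by linarith : 1 ≤ |N * α + i|)]

lemma integral_tent_shift_mul_abs (hN : 0 < N) (c : ℝ) :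
    ∫ α, N * tent (N * α - c) * |α| = (∫ u, tent u * |u + c|) / N := by
  calc ∫ α, N * tent (N * α - c) * |α| = ∫ α, tent (N * α - c) * |N * α - c + c| := by
        simp_rw [sub_add_cancel, abs_mul, abs_of_pos hN, mul_left_comm, mul_assoc]
    _ = (∫ u, tent (u - c) * |u - c + c|) / N := by
        rw [Measure.integral_comp_mul_left fun u => tent (u - c) * |u - c + c|,
          abs_of_pos (inv_pos.mpr hN), smul_eq_mul, inv_mul_eq_div]
    _ = (∫ u, tent u * |u + c|) / N := by
        rw [integral_sub_right_eq_self fun u => tent u * |u + c|]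

lemma integrable_tent_shift_mul_abs (hN : 0 < N) (c : ℝ) :
    Integrable fun α => N * tent (N * α - c) * |α| := by
  have h : Integrable fun u => tent u * |u + c| := integrable_tent_mul (by fun_prop)
  refine ((h.comp_sub_right c).comp_mul_left' hN.ne').congr (.of_forall fun α => ?_)
  simp only [sub_add_cancel, abs_mul, abs_of_pos hN]
  ring

lemma integral_tentPair_mul_abs (hN : 0 < N) (i : ℕ) :
    ∫ α, tentPair N i α * |α| = (∫ u, tent u * |u + i|) / N := by
  have hsymm : ∀ α, tentPair N i α * |α|
      = (N * tent (N * α - i) * |α| + N * tent (N * -α - i) * |-α|) / 2 := fun α => by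
    rw [tentPair, ← tent_neg (N * α + i), abs_neg]
    ring_nf
  have hint := integrable_tent_shift_mul_abs hN i
  simp_rw [hsymm]
  rw [integral_div, integral_add hint hint.comp_neg,
    integral_neg_eq_self fun α => N * tent (N * α - i) * |α|, add_self_div_two,
    integral_tent_shift_mul_abs hN]

lemma intervalIntegral_tentPair_mul_abs {i : ℕ} (hi : (i : ℝ) + 1 ≤ N) :
    ∫ α in (-1 : ℝ)..1, tentPair N i α * |α| = if i = 0 then 1 / (3 * N) else i / N := by
  have hN : 0 < N := (by positivity : (0 : ℝ) < i + 1).trans_le hi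
  have hsupp : Function.support (fun α => tentPair N i α * |α|) ⊆ Set.Ioc (-1) 1 := fun α hα => by
    have habs : |α| < 1 := not_le.mp fun h => hα (by simp only [tentPair_eq_zero hi h, zero_mul])
    exact ⟨(abs_lt.mp habs).1, (abs_lt.mp habs).2.le⟩
  rw [intervalIntegral.integral_eq_integral_of_support_subset hsupp,
    integral_tentPair_mul_abs hN]
  split_ifs with h0
  · simp only [h0, Nat.cast_zero, add_zero, integral_tent_mul_abs]
    rw [div_div]
  · rw [integral_tent_mul_abs_add (by exact_mod_cast Nat.one_le_iff_ne_zero.mpr h0)]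

end ModulatedFejer

section FejerSum

/-- The function whose Fourier transform is the even piecewise linear interpolant with value
`N * a 0` at `0` and `N * a i / 2` at `±i / N` for `1 ≤ i < n`. -/
def fejerSum (N : ℝ) (n : ℕ) (a : ℕ → ℝ) (x : ℝ) : ℝ :=
  ∑ i ∈ Finset.range n, a i * modulatedFejer N i x

lemma fejerSum_eq_mul (N : ℝ) (n : ℕ) (a : ℕ → ℝ) (x : ℝ) :
    fejerSum N n a x
      = fejerKernel (x / N) * ∑ i ∈ Finset.range n, a i * Real.cos (i * (2 * Real.pi * x / N)) := by
  rw [fejerSum, Finset.mul_sum]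
  refine Finset.sum_congr rfl fun i _ => ?_
  rw [modulatedFejer, mul_left_comm]
  ring_nf

lemma continuous_fejerSum (N : ℝ) (n : ℕ) (a : ℕ → ℝ) : Continuous (fejerSum N n a) :=
  continuous_finsetSum _ fun i _ => continuous_const.mul (continuous_modulatedFejer N i)

lemma fejerSum_neg (N : ℝ) (n : ℕ) (a : ℕ → ℝ) (x : ℝ) :
    fejerSum N n a (-x) = fejerSum N n a x := by
  simp only [fejerSum, modulatedFejer_neg]

lemma fejerSum_zero (N : ℝ) (n : ℕ) (a : ℕ → ℝ) :
    fejerSum N n a 0 = ∑ i ∈ Finset.range n, a i := by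
  simp only [fejerSum, modulatedFejer_zero, mul_one]

lemma integrable_fejerSum {N : ℝ} (hN : N ≠ 0) (n : ℕ) (a : ℕ → ℝ) :
    Integrable (fejerSum N n a) :=
  integrable_finsetSum _ fun i _ => (integrable_modulatedFejer hN i).const_mul _

lemma fourierT_fejerSum {N : ℝ} (hN : 0 < N) (n : ℕ) (a : ℕ → ℝ) (α : ℝ) :
    fourierT (fejerSum N n a) α = (∑ i ∈ Finset.range n, a i * tentPair N i α : ℝ) := by
  unfold fejerSum
  rw [fourierT_sum _ _ fun i _ => integrable_modulatedFejer hN.ne' i]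
  push_cast
  simp only [fourierT_modulatedFejer hN]

variable {N n : ℕ} {a : ℕ → ℝ}

lemma memA1_fejerSum (hN : 0 < N) (hcos : ∀ θ, 0 ≤ ∑ i ∈ Finset.range n, a i * Real.cos (i * θ))
    (ha : ∀ i < n, N ≤ i → a i ≤ 0) : memA1 (fejerSum N n a) := by
  have hN' : (0 : ℝ) < N := Nat.cast_pos.mpr hN
  refine ⟨continuous_fejerSum _ _ _, fejerSum_neg _ _ _, fun x => ?_,
    integrable_fejerSum hN'.ne' _ _, fun α hα => ?_⟩
  · rw [fejerSum_eq_mul]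
    exact mul_nonneg (fejerKernel_nonneg _) (hcos _)
  · rw [fourierT_fejerSum hN', Complex.ofReal_re]
    refine Finset.sum_nonpos fun i hi => ?_
    rcases lt_or_ge i N with hiN | hNi
    · rw [tentPair_eq_zero (by exact_mod_cast hiN) hα, mul_zero]
    · exact mul_nonpos_of_nonpos_of_nonneg (ha i (Finset.mem_range.mp hi) hNi)
        (tentPair_nonneg hN'.le i α)

lemma rho1_fejerSum (hN : 0 < N) :
    rho1 (fejerSum N n a)
      = ∑ i ∈ Finset.range n,
          a i * (tentPair N i 0 + ∫ α in (-1 : ℝ)..1, tentPair N i α * |α|) := by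
  have hint : ∀ i ∈ Finset.range n,
      IntervalIntegrable (fun α => a i * (tentPair N i α * |α|)) volume (-1) 1 := fun i _ =>
    (continuous_const.mul ((continuous_tentPair N i).mul continuous_abs)).intervalIntegrable _ _
  simp only [rho1, fourierT_fejerSum (Nat.cast_pos.mpr hN), Complex.ofReal_re, Finset.sum_mul,
    mul_assoc, mul_add, Finset.sum_add_distrib]
  rw [intervalIntegral.integral_finsetSum hint]
  simp only [intervalIntegral.integral_const_mul]

lemma rho1_fejerSum_le (hN : 0 < N) (hNn : N ≤ n) (ha : ∀ i < n, N ≤ i → a i ≤ 0) :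
    rho1 (fejerSum N n a)
      ≤ (N + 1 / (3 * N)) * a 0 + (∑ i ∈ Finset.range N, i * a i) / N := by
  have hN' : (0 : ℝ) < N := Nat.cast_pos.mpr hN
  have htail : ∀ i ∈ Finset.Ico N n,
      a i * (tentPair N i 0 + ∫ α in (-1 : ℝ)..1, tentPair N i α * |α|) ≤ 0 := fun i hi => by
    obtain ⟨hNi, hin⟩ := Finset.mem_Ico.mp hi
    refine mul_nonpos_of_nonpos_of_nonneg (ha i hin hNi)
      (add_nonneg (tentPair_nonneg hN'.le i 0) ?_)
    exact intervalIntegral.integral_nonneg (by norm_num) fun α _ =>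
      mul_nonneg (tentPair_nonneg hN'.le i α) (abs_nonneg α)
  have hhead : ∀ i ∈ Finset.range N,
      a i * (tentPair N i 0 + ∫ α in (-1 : ℝ)..1, tentPair N i α * |α|)
        = (if i = 0 then (N + 1 / (3 * N)) * a i else 0) + i * a i / N := fun i hi => by
    rw [tentPair_zero_right,
      intervalIntegral_tentPair_mul_abs (by exact_mod_cast Finset.mem_range.mp hi)]
    split_ifs with h0
    · simp [h0, mul_comm]
    · ring
  rw [rho1_fejerSum hN, ← Finset.sum_range_add_sum_Ico _ hNn, Finset.sum_congr rfl hhead,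
    Finset.sum_add_distrib, Finset.sum_ite_eq', if_pos (Finset.mem_range.mpr hN), Finset.sum_div]
  exact add_le_of_nonpos_right (Finset.sum_nonpos htail)

end FejerSum

section Autocorrelation

/-- The coefficients of the cosine polynomial `|∑ k < n, b k * exp (i k θ)|²`: the lag-`i`
autocorrelation of `b 0, …, b (n - 1)`, doubled for `i ≠ 0` to account for the lag `-i`. -/
def autocorr {R : Type*} [Semiring R] (n : ℕ) (b : ℕ → R) (i : ℕ) : R :=
  (if i = 0 then 1 else 2) * ∑ k ∈ Finset.range (n - i), b k * b (k + i)

lemma intCast_autocorr (n : ℕ) (b : ℕ → ℤ) (i : ℕ) :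
    ((autocorr n b i : ℤ) : ℝ) = autocorr n (fun k => (b k : ℝ)) i := by
  simp only [autocorr]
  push_cast
  rfl

lemma autocorr_succ {R : Type*} [Semiring R] {n i : ℕ} (b : ℕ → R) (hi : i ≤ n) :
    autocorr (n + 1) b i = autocorr n b i + (if i = 0 then 1 else 2) * (b (n - i) * b n) := by
  rw [autocorr, autocorr, Nat.succ_sub hi, Finset.sum_range_succ, Nat.sub_add_cancel hi, mul_add]

lemma autocorr_self {R : Type*} [Semiring R] (n : ℕ) (b : ℕ → R) : autocorr n b n = 0 := by
  simp [autocorr]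

lemma sum_reflect_mul_cos (n : ℕ) (b : ℕ → ℝ) (θ : ℝ) :
    ∑ i ∈ Finset.range n, b (n - (i + 1)) * Real.cos ((i + 1 : ℕ) * θ)
      = (∑ k ∈ Finset.range n, b k * Real.cos (k * θ)) * Real.cos (n * θ)
        + (∑ k ∈ Finset.range n, b k * Real.sin (k * θ)) * Real.sin (n * θ) := by
  calc ∑ i ∈ Finset.range n, b (n - (i + 1)) * Real.cos ((i + 1 : ℕ) * θ)
      = ∑ k ∈ Finset.range n, b k * Real.cos (n * θ - k * θ) := by
        refine .trans (Finset.sum_congr rfl fun i hi => ?_) (Finset.sum_range_reflect _ n)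
        have hin : i + 1 ≤ n := Finset.mem_range.mp hi
        rw [Nat.sub_sub, add_comm 1 i, Nat.cast_sub hin]
        ring_nf
    _ = (∑ k ∈ Finset.range n, b k * Real.cos (k * θ)) * Real.cos (n * θ)
        + (∑ k ∈ Finset.range n, b k * Real.sin (k * θ)) * Real.sin (n * θ) := by
        rw [Finset.sum_mul, Finset.sum_mul, ← Finset.sum_add_distrib]
        refine Finset.sum_congr rfl fun k _ => ?_
        rw [Real.cos_sub]
        ring

lemma sum_lag_mul_cos (n : ℕ) (b : ℕ → ℝ) (θ : ℝ) :
    ∑ i ∈ Finset.range (n + 1), (if i = 0 then 1 else 2) * (b (n - i) * b n) * Real.cos (i * θ)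
      = b n ^ 2 + 2 * b n * ((∑ k ∈ Finset.range n, b k * Real.cos (k * θ)) * Real.cos (n * θ)
        + (∑ k ∈ Finset.range n, b k * Real.sin (k * θ)) * Real.sin (n * θ)) := by
  rw [← sum_reflect_mul_cos, Finset.sum_range_succ', Finset.mul_sum, add_comm]
  congr 1
  · simp [sq]
  · refine Finset.sum_congr rfl fun i _ => ?_
    rw [if_neg i.succ_ne_zero]
    ring

lemma sum_autocorr_mul_cos (n : ℕ) (b : ℕ → ℝ) (θ : ℝ) :
    ∑ i ∈ Finset.range n, autocorr n b i * Real.cos (i * θ)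
      = (∑ k ∈ Finset.range n, b k * Real.cos (k * θ)) ^ 2
        + (∑ k ∈ Finset.range n, b k * Real.sin (k * θ)) ^ 2 := by
  induction n with
  | zero => simp
  | succ n ih =>
    have hsplit : ∀ i ∈ Finset.range (n + 1), autocorr (n + 1) b i * Real.cos (i * θ)
        = autocorr n b i * Real.cos (i * θ)
          + (if i = 0 then 1 else 2) * (b (n - i) * b n) * Real.cos (i * θ) := fun i hi => by
      rw [autocorr_succ b (Finset.mem_range_succ_iff.mp hi), add_mul]
    rw [Finset.sum_congr rfl hsplit, Finset.sum_add_distrib, sum_lag_mul_cos,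
      Finset.sum_range_succ, autocorr_self, ih, Finset.sum_range_succ _ n,
      Finset.sum_range_succ _ n]
    linear_combination -b n ^ 2 * Real.sin_sq_add_cos_sq (n * θ)

lemma sum_autocorr (n : ℕ) (b : ℕ → ℝ) :
    ∑ i ∈ Finset.range n, autocorr n b i = (∑ k ∈ Finset.range n, b k) ^ 2 := by
  simpa using sum_autocorr_mul_cos n b 0

lemma sum_autocorr_mul_cos_nonneg (n : ℕ) (b : ℕ → ℝ) (θ : ℝ) :
    0 ≤ ∑ i ∈ Finset.range n, autocorr n b i * Real.cos (i * θ) := by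
  rw [sum_autocorr_mul_cos]
  positivity

end Autocorrelation

section LowerBound

variable {g : ℝ → ℝ}

lemma integral_abs_neg_one_one : ∫ α in (-1 : ℝ)..1, |α| = 1 := by
  have hneg : ∫ α in (-1 : ℝ)..0, |α| = ∫ α in (0 : ℝ)..1, |α| := by
    simpa using (intervalIntegral.integral_comp_neg (a := 0) (b := 1) fun α : ℝ => |α|).symm
  have hpos : ∫ α in (0 : ℝ)..1, |α| = ∫ α in (0 : ℝ)..1, α :=
    intervalIntegral.integral_congr fun α hα => by
      rw [Set.uIcc_of_le zero_le_one] at hα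
      exact abs_of_nonneg hα.1
  rw [← intervalIntegral.integral_add_adjacent_intervals
    (continuous_abs.intervalIntegrable _ _) (continuous_abs.intervalIntegrable 0 1), hneg, hpos,
    integral_id]
  norm_num

lemma memA1.rho1_nonneg (hg : memA1 g) : 0 ≤ rho1 g := by
  obtain ⟨-, -, hnonneg, -, -⟩ := hg
  have hbound : ∀ α, ‖(fourierT g α).re‖ ≤ (fourierT g 0).re := fun α => by
    refine (Complex.abs_re_le_norm _).trans ((norm_fourierT_le g α).trans_eq ?_)
    simp only [abs_of_nonneg (hnonneg _), fourierT_zero, Complex.ofReal_re]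
  have hint : ‖∫ α in (-1 : ℝ)..1, (fourierT g α).re * |α|‖ ≤ (fourierT g 0).re :=
    calc ‖∫ α in (-1 : ℝ)..1, (fourierT g α).re * |α|‖
        ≤ ∫ α in (-1 : ℝ)..1, (fourierT g 0).re * |α| := by
          refine intervalIntegral.norm_integral_le_of_norm_le (by norm_num)
            (.of_forall fun α _ => ?_) (Continuous.intervalIntegrable (by fun_prop) _ _)
          rw [norm_mul, Real.norm_eq_abs |α|, abs_abs]
          exact mul_le_mul_of_nonneg_right (hbound α) (abs_nonneg α)
      _ = (fourierT g 0).re := by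
          rw [intervalIntegral.integral_const_mul, integral_abs_neg_one_one, mul_one]
  rw [rho1]
  linarith [(abs_le.mp hint).1]

lemma C1_le (hg : memA1 g) (hg0 : 0 < g 0) : C1 ≤ rho1 g / g 0 := by
  refine csInf_le ⟨0, ?_⟩ ⟨g, hg, fun h => hg0.ne' (congrFun h 0), hg0, rfl⟩
  rintro _ ⟨f, hf, -, hf0, rfl⟩
  exact div_nonneg hf.rho1_nonneg hf0.le

end LowerBound

section Certificate

/-- Coefficients `b k` of the trigonometric polynomial behind the near-extremal function. They come
from a numerical minimisation of `ρ₁(g) / g(0)` over the functions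
`g = fejerSum 44 115 (autocorr 115 b)`, rounded to integers. -/
def certificate (k : ℕ) : ℤ :=
  List.getD
   [37, 78, 113, 170, 216, 280, 324, 350, 405, 464, 517, 546, 598, 633, 681, 728, 758, 782,
    789, 783, 788, 782, 792, 808, 793, 786, 782, 803, 780, 763, 751, 731, 729, 716, 707, 707,
    698, 691, 687, 673, 674, 668, 666, 673, 631, 589, 551, 472, 424, 344, 280, 274, 214, 146,
    87, 73, 21, -6, -50, -97, -124, -144, -131, -107, -88, -56, -46, -62, -32, -22, -15, -58,
    -36, -20, -7, 8, 10, 16, 21, 18, 21, 18, 15, 18, 10, 4, -7, -33, -30, -37, -38, -18, -15,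
    6, 23, -3, 6, 18, 34, 17, 22, 17, 22, 33, 37, 42, 27, 11, -8, -31, -44, -29, -43, -40, -39] k 0

lemma autocorr_certificate_nonpos : ∀ i < 115, 44 ≤ i → autocorr 115 certificate i ≤ 0 := by
  decide +kernel

lemma certificate_sum_pos : 0 < ∑ k ∈ Finset.range 115, certificate k := by decide +kernel

-- The bound `ρ₁(g) < 1.3208 * g(0)` furnished by `rho1_fejerSum_le`, times `10000 * (3 * 44)`.
lemma certificate_bound :
    10000 * ((3 * 44 ^ 2 + 1) * autocorr 115 certificate 0
        + 3 * ∑ i ∈ Finset.range 44, i * autocorr 115 certificate i)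
      < 13208 * (3 * 44) * (∑ k ∈ Finset.range 115, certificate k) ^ 2 := by
  decide +kernel

/-- The near-extremal function for `C1` given by the coefficients `certificate`. -/
def nearExtremal : ℝ → ℝ := fejerSum (44 : ℕ) 115 (autocorr 115 fun k => (certificate k : ℝ))

lemma autocorr_certificate_cast_nonpos :
    ∀ i < 115, 44 ≤ i → autocorr 115 (fun k => (certificate k : ℝ)) i ≤ 0 := fun i hi hi' => by
  rw [← intCast_autocorr]
  exact_mod_cast autocorr_certificate_nonpos i hi hi'

lemma memA1_nearExtremal : memA1 nearExtremal :=
  memA1_fejerSum (by norm_num) (sum_autocorr_mul_cos_nonneg _ _) autocorr_certificate_cast_nonpos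

lemma nearExtremal_zero :
    nearExtremal 0 = (∑ k ∈ Finset.range 115, (certificate k : ℝ)) ^ 2 := by
  rw [nearExtremal, fejerSum_zero, sum_autocorr]

lemma nearExtremal_zero_pos : 0 < nearExtremal 0 := by
  rw [nearExtremal_zero]
  exact pow_pos (by exact_mod_cast certificate_sum_pos) 2

lemma rho1_nearExtremal_div_lt : rho1 nearExtremal / nearExtremal 0 < 1.3208 := by
  have hrho : rho1 nearExtremal ≤ _ :=
    rho1_fejerSum_le (by norm_num) (by norm_num) autocorr_certificate_cast_nonpos
  have hbound := Int.cast_lt (R := ℝ).mpr certificate_bound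
  push_cast [intCast_autocorr] at hrho hbound
  rw [div_lt_iff₀ nearExtremal_zero_pos, nearExtremal_zero]
  linarith

end Certificate

/-- `C₁ < 1.3208`: there exists a nonzero `g ∈ A₁` with `g(0) > 0` and
`ρ₁(g)/g(0) < 1.3208`. -/
theorem statement16 :
    C1 < 1.3208 ∧
      ∃ g : ℝ → ℝ, memA1 g ∧ g ≠ 0 ∧ 0 < g 0 ∧ rho1 g / g 0 < 1.3208 := by
  exact ⟨(C1_le memA1_nearExtremal nearExtremal_zero_pos).trans_lt rho1_nearExtremal_div_lt,
    nearExtremal, memA1_nearExtremal, fun h => nearExtremal_zero_pos.ne' (congrFun h 0),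
    nearExtremal_zero_pos, rho1_nearExtremal_div_lt⟩

end
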